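/- arXiv:solv-int/9812001 — 2 statements merged into one kernel-verified Lean document; each statement's English description precedes it below -/
import Mathlib

section
/- Lax representation in cartesian coordinates. Let H = 4·p_x·p_y and for λ ∈ ℝ define the 2×2 matrices L(λ) = [[p_x + (2λ − x)p_y, λ² − λx + (x² − 2y)/4], [−4p_y², −(p_x + (2λ − x)p_y)]] and A = [[0,1],[0,0]]. Then for every λ and every matrix entry (i,j), {H, L(λ)_{ij}} = ([A, L(λ)])_{ij}, where [A,L] = A·L − L·A. -/
/-- The canonical Poisson bracket of two functions of `(x, y, pₓ, p_y)` on `ℝ⁴`: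
`{F,G} = ∂F/∂pₓ·∂G/∂x − ∂F/∂x·∂G/∂pₓ + ∂F/∂p_y·∂G/∂y − ∂F/∂y·∂G/∂p_y`. -/
noncomputable def pb (F G : ℝ → ℝ → ℝ → ℝ → ℝ) (x y px py : ℝ) : ℝ :=
    deriv (fun s => F x y s py) px * deriv (fun s => G s y px py) x
  - deriv (fun s => F s y px py) x * deriv (fun s => G x y s py) px
  + deriv (fun s => F x y px s) py * deriv (fun s => G x s px py) y
  - deriv (fun s => F x s px py) y * deriv (fun s => G x y px s) py

/-- The Lax matrix of the free Stäckel system separable in cartesian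
coordinates, with spectral parameter `lam`. -/
noncomputable def L (lam x y px py : ℝ) : Matrix (Fin 2) (Fin 2) ℝ :=
  !![px + (2 * lam - x) * py, lam ^ 2 - lam * x + (x ^ 2 - 2 * y) / 4;
     -(4 * py ^ 2), -(px + (2 * lam - x) * py)]

/-- The second Lax matrix. -/
noncomputable def A : Matrix (Fin 2) (Fin 2) ℝ := !![0, 1; 0, 0]

/-- The free Hamiltonian `H = 4pₓp_y` in cartesian coordinates. -/
noncomputable def Ham : ℝ → ℝ → ℝ → ℝ → ℝ := fun _ _ px py => 4 * px * py

/-- Lax representation in cartesian coordinates: the Lax equation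
`{H, L(λ)} = [A, L(λ)]` holds entrywise. -/
theorem lax_cartesian :
    ∀ (lam x y px py : ℝ) (i j : Fin 2),
      pb Ham (fun x y px py => L lam x y px py i j) x y px py =
        (A * L lam x y px py - L lam x y px py * A) i j := by
  intro lam x y px py i j
  have hd : ∀ (f : ℝ → ℝ) (a b c t : ℝ), (∀ s, f s = a + b * s + c * s ^ 2) →
      deriv f t = b + 2 * c * t := by
    intro f a b c t h
    have h1 : f = fun s => a + b * s + c * s ^ 2 := funext h
    rw [h1]
    have h2 := (((hasDerivAt_id t).const_mul b).const_add a).add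
      (((hasDerivAt_id t).pow 2).const_mul c)
    have h3 : HasDerivAt (fun s : ℝ => a + b * s + c * s ^ 2) (b + 2 * c * t) t := by
      refine (h2.congr_deriv ?_)
      simp
      ring
    exact h3.deriv
  unfold pb
  have e1 : deriv (fun s => Ham x y s py) px = 4 * py := by
    rw [hd _ 0 (4 * py) 0 _ (by intro s; simp only [Ham]; ring)]; ring
  have e2 : deriv (fun s => Ham s y px py) x = 0 := by simp [Ham]
  have e3 : deriv (fun s => Ham x y px s) py = 4 * px := by
    rw [hd _ 0 (4 * px) 0 _ (by intro s; simp only [Ham]; ring)]; ring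
  have e4 : deriv (fun s => Ham x s px py) y = 0 := by simp [Ham]
  rw [e1, e2, e3, e4]
  fin_cases i <;> fin_cases j <;>
    simp only [L, A, Matrix.sub_apply, Matrix.mul_apply, Fin.sum_univ_two, Fin.zero_eta,
      Fin.mk_one, Matrix.of_apply, Matrix.cons_val_zero, Matrix.cons_val_one, Matrix.cons_val',
      Matrix.cons_val_fin_one]
  · rw [hd (fun s => px + (2 * lam - s) * py) (px + 2 * lam * py) (-py) 0 x (by intro s; ring),
      deriv_const]
    ring
  · rw [hd (fun s => lam ^ 2 - lam * s + (s ^ 2 - 2 * y) / 4) (lam ^ 2 - y / 2) (-lam) (1 / 4) x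
        (by intro s; ring),
      hd (fun s => lam ^ 2 - lam * x + (x ^ 2 - 2 * s) / 4) (lam ^ 2 - lam * x + x ^ 2 / 4)
        (-1 / 2) 0 y (by intro s; ring)]
    ring
  · simp only [deriv_const]
    ring
  · rw [hd (fun s => -(px + (2 * lam - s) * py)) (-(px + 2 * lam * py)) py 0 x (by intro s; ring),
      deriv_const]
    ring
end

section
/- Spectral curve and commuting integrals in cartesian coordinates. Let L(λ) = [[p_x + (2λ − x)p_y, λ² − λx + (x² − 2y)/4], [−4p_y², −(p_x + (2λ − x)p_y)]]. Then for every λ ∈ ℝ, −det L(λ) = H·λ + J, where H = 4·p_x·p_y and J = p_x² − 2x·p_x·p_y + 2y·p_y²; moreover {H, J} = 0. -/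
/-- The second integral of motion `J = pₓ² − 2x pₓ p_y + 2y p_y²`. -/
noncomputable def J : ℝ → ℝ → ℝ → ℝ → ℝ :=
  fun x y px py => px ^ 2 - 2 * x * px * py + 2 * y * py ^ 2

/-- Spectral curve and commuting integrals in cartesian coordinates:
`−det L(λ) = Hλ + J` and `{H, J} = 0`. -/
theorem spectral_curve_cartesian :
    (∀ lam x y px py : ℝ,
      -(L lam x y px py).det = Ham x y px py * lam + J x y px py) ∧
    (∀ x y px py : ℝ, pb Ham J x y px py = 0) := by
  refine ⟨fun lam x y px py => ?_, fun x y px py => ?_⟩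
  · simp only [L, Ham, J, Matrix.det_fin_two_of]
    ring
  · have h1 : deriv (fun s => 4 * s * py) px = 4 * py := by
      have h := ((hasDerivAt_id px).const_mul 4).mul_const py
      simpa using h.deriv
    have h2 : deriv (fun s => px ^ 2 - 2 * s * px * py + 2 * y * py ^ 2) x
        = -(2 * px * py) := by
      have h := (((((hasDerivAt_id x).const_mul 2).mul_const px).mul_const py).const_sub
        (px ^ 2)).add_const (2 * y * py ^ 2)
      simpa using h.deriv
    have h3 : deriv (fun s => 4 * px * s) py = 4 * px := by
      have h := (hasDerivAt_id py).const_mul (4 * px)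
      simpa using h.deriv
    have h4 : deriv (fun s => px ^ 2 - 2 * x * px * py + 2 * s * py ^ 2) y
        = 2 * py ^ 2 := by
      have h := (((hasDerivAt_id y).const_mul 2).mul_const (py ^ 2)).const_add
        (px ^ 2 - 2 * x * px * py)
      simpa using h.deriv
    simp only [pb, Ham, J, h1, h2, h3, h4, deriv_const]
    ring
end
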